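/- Let α ∈ (ℤ_{≥0})ⁿ and r₁ > 0, and set q_α := Σ_{j=1}^n (α_j+1)/p_j − 1. Then the integral ∫_{{ψ < log r₁}} |w^α|² e^{−ψ} dλ_n is finite if and only if q_α > 0, and when q_α > 0 it equals πⁿ (q_α+1) r₁^{q_α} / (q_α · Π_{j=1}^n (α_j+1)). -/

import Mathlib

open MeasureTheory Filter

/-- `psi p w = max_j 2 p_j log |w_j|`. -/
noncomputable def psi {n : ℕ} (p : Fin n → ℝ) (w : Fin n → ℂ) : ℝ :=
  ⨆ j, 2 * p j * Real.log ‖w j‖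

/-- Tonelli for products of functions of one variable. -/
theorem lint_prod {n : ℕ} (f : Fin n → ℂ → ENNReal) (hf : ∀ i, Measurable (f i)) :
    ∫⁻ x : Fin n → ℂ, ∏ i, f i (x i) = ∏ i, ∫⁻ z, f i z := by
  induction n with
  | zero => simp [volume_pi, lintegral_const]
  | succ n ih =>
    have := (volume_preserving_piFinSuccAbove (fun _ : Fin (n+1) => ℂ) 0).symm
    rw [← this.lintegral_comp_emb (MeasurableEquiv.measurableEmbedding _)]
    simp_rw [MeasurableEquiv.piFinSuccAbove_symm_apply, Fin.insertNthEquiv,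
      Fin.prod_univ_succ, Fin.insertNth_zero, Equiv.coe_fn_mk, Fin.cons_succ, Fin.cons_zero]
    have h2 := lintegral_prod_mul (μ := (volume : Measure ℂ))
      (ν := (volume : Measure (Fin n → ℂ))) (f := f 0)
      (g := fun x => ∏ i, f (Fin.succ i) (x i)) (hf 0).aemeasurable
      (by
        apply Measurable.aemeasurable
        apply Finset.measurable_fun_prod
        intro i _
        exact (hf _).comp (measurable_pi_apply i))
    rw [ih (fun i => f i.succ) (fun i => hf _)] at h2
    exact h2

theorem one_dim (a : ℕ) (R : ℝ) (hR : 0 < R) :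
    ∫⁻ z : ℂ, (Metric.ball (0:ℂ) R).indicator (fun z => ENNReal.ofReal (‖z‖ ^ (2 * a))) z
      = ENNReal.ofReal (Real.pi * R ^ (2 * a + 2) / (a + 1)) := by
  rw [← Complex.lintegral_comp_polarCoord_symm]
  have key : ∀ x : ℝ × ℝ, x ∈ polarCoord.target →
      ENNReal.ofReal x.1 • (Metric.ball (0:ℂ) R).indicator
        (fun z => ENNReal.ofReal (‖z‖ ^ (2 * a))) (Complex.polarCoord.symm x)
      = (Set.Ioo 0 R).indicator (fun r : ℝ => ENNReal.ofReal (r ^ (2 * a + 1))) x.1 := by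
    rintro ⟨r, θ⟩ h
    simp only [polarCoord_target, Set.mem_prod, Set.mem_Ioi] at h
    have hn := Complex.norm_polarCoord_symm (r, θ)
    simp only [abs_of_pos h.1] at hn
    by_cases hr : r < R
    · have hb : Complex.polarCoord.symm (r, θ) ∈ Metric.ball (0:ℂ) R := by
        rw [mem_ball_zero_iff, hn]; exact hr
      have hi : r ∈ Set.Ioo 0 R := ⟨h.1, hr⟩
      rw [Set.indicator_of_mem hb, Set.indicator_of_mem hi, hn,
        smul_eq_mul, ← ENNReal.ofReal_mul h.1.le]
      congr 1; ring
    · have hb : Complex.polarCoord.symm (r, θ) ∉ Metric.ball (0:ℂ) R := by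
        rw [mem_ball_zero_iff, hn]; exact hr
      rw [Set.indicator_of_notMem hb,
        Set.indicator_of_notMem (fun h' => hr h'.2), smul_zero]
  rw [setLIntegral_congr_fun (by
    rw [polarCoord_target]; exact measurableSet_Ioi.prod measurableSet_Ioo) key,
    polarCoord_target, Measure.volume_eq_prod, ← Measure.prod_restrict]
  have h2 := lintegral_prod_mul (μ := (volume : Measure ℝ).restrict (Set.Ioi 0))
    (ν := (volume : Measure ℝ).restrict (Set.Ioo (-Real.pi) Real.pi))
    (f := (Set.Ioo 0 R).indicator (fun r : ℝ => ENNReal.ofReal (r ^ (2 * a + 1))))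
    (g := fun _ => 1) (Measurable.aemeasurable
      ((by fun_prop : Measurable fun r : ℝ => ENNReal.ofReal (r ^ (2 * a + 1))).indicator
        measurableSet_Ioo)) aemeasurable_const
  simp only [mul_one] at h2
  rw [h2, setLIntegral_indicator measurableSet_Ioo, lintegral_one, Measure.restrict_apply_univ,
    Real.volume_Ioo, Set.inter_eq_left.mpr (fun x hx => hx.1),
    ← ofReal_integral_eq_lintegral_ofReal, ← integral_Ioc_eq_integral_Ioo,
    ← intervalIntegral.integral_of_le hR.le, integral_pow, ← ENNReal.ofReal_mul]
  · congr 1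
    push_cast
    simp
    field_simp
    ring
  · simp; positivity
  · exact (Continuous.integrableOn_Icc (by fun_prop)).mono_set Set.Ioo_subset_Icc_self
  · filter_upwards [ae_restrict_mem measurableSet_Ioo] with x hx
    have := hx.1
    simp only [Pi.zero_apply]
    positivity

theorem psi_meas {n : ℕ} (p : Fin n → ℝ) : Measurable (psi p) := by
  unfold psi
  apply Measurable.iSup
  intro i
  fun_prop

theorem psi_lt_iff {n : ℕ} (hn : 0 < n) (p : Fin n → ℝ) (hp : ∀ j, 0 < p j) (s : ℝ)
    (w : Fin n → ℂ) (hw : ∀ j, w j ≠ 0) :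
    psi p w < s ↔ ∀ j, w j ∈ Metric.ball (0:ℂ) (Real.exp (s / (2 * p j))) := by
  have : Nonempty (Fin n) := ⟨⟨0, hn⟩⟩
  unfold psi
  have hlt : (⨆ j, 2 * p j * Real.log ‖w j‖) < s ↔ ∀ j, 2 * p j * Real.log ‖w j‖ < s := by
    constructor
    · intro h j
      exact (le_ciSup (f := fun j => 2 * p j * Real.log ‖w j‖)
        (Set.finite_range _).bddAbove j).trans_lt h
    · intro h
      obtain ⟨j, hj⟩ := exists_eq_ciSup_of_finite (f := fun j => 2 * p j * Real.log ‖w j‖)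
      rw [← hj]
      exact h j
  rw [hlt]
  refine forall_congr' fun j => ?_
  have := hp j
  rw [mem_ball_zero_iff, ← Real.log_lt_iff_lt_exp (norm_pos_iff.mpr (hw j)), lt_div_iff₀' (by positivity)]

theorem ae_ne {n : ℕ} : ∀ᵐ w : Fin n → ℂ, ∀ j, w j ≠ 0 := by
  rw [ae_all_iff]
  intro j
  have h : ∀ᵐ z : ℂ, z ≠ 0 := by simp [ae_iff]
  exact (Measure.quasiMeasurePreserving_eval (fun _ : Fin n => (volume : Measure ℂ)) j).ae h

theorem box {n : ℕ} (hn : 0 < n) (p : Fin n → ℝ) (hp : ∀ j, 0 < p j) (α : Fin n → ℕ) (s : ℝ) :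
    ∫⁻ w in {w : Fin n → ℂ | psi p w < s}, ENNReal.ofReal (‖∏ j, (w j) ^ (α j)‖ ^ 2)
      = ENNReal.ofReal (Real.pi ^ n / (∏ j, ((α j : ℝ) + 1)) *
          Real.exp (s * ∑ j, ((α j : ℝ) + 1) / p j)) := by
  rw [← lintegral_indicator (measurableSet_lt (psi_meas p) measurable_const)]
  have : ∫⁻ w : Fin n → ℂ, ({w : Fin n → ℂ | psi p w < s}.indicator
      (fun w => ENNReal.ofReal (‖∏ j, (w j) ^ (α j)‖ ^ 2))) w =
      ∫⁻ w : Fin n → ℂ, ∏ j, (Metric.ball (0:ℂ) (Real.exp (s / (2 * p j)))).indicator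
        (fun z => ENNReal.ofReal (‖z‖ ^ (2 * α j))) (w j) := by
    apply lintegral_congr_ae
    filter_upwards [ae_ne] with w hw
    by_cases h : psi p w < s
    · rw [Set.indicator_of_mem (by exact h)]
      rw [psi_lt_iff hn p hp s w hw] at h
      rw [Finset.prod_congr rfl (fun j _ => Set.indicator_of_mem (h j) _),
        ← ENNReal.ofReal_prod_of_nonneg (fun _ _ => by positivity), norm_prod, ← Finset.prod_pow]
      simp [pow_mul']
    · rw [Set.indicator_of_notMem (by exact h)]
      rw [psi_lt_iff hn p hp s w hw] at h
      push Not at h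
      obtain ⟨j, hj⟩ := h
      exact (Finset.prod_eq_zero (Finset.mem_univ j) (Set.indicator_of_notMem hj _)).symm
  rw [this, lint_prod]
  · rw [Finset.prod_congr rfl (fun j _ => one_dim (α j) _ (Real.exp_pos _)),
      ← ENNReal.ofReal_prod_of_nonneg (fun _ _ => by positivity), Finset.prod_div_distrib,
      Finset.prod_mul_distrib]
    congr 1
    rw [Finset.prod_congr rfl (fun j _ => (Real.exp_nat_mul _ _).symm), ← Real.exp_sum]
    have : ∑ j, ((2 * α j + 2 : ℕ) : ℝ) * (s / (2 * p j)) = s * ∑ j, ((α j : ℝ) + 1) / p j := by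
      rw [Finset.mul_sum]
      refine Finset.sum_congr rfl fun j _ => ?_
      have := (hp j).ne'
      push_cast
      field_simp
    rw [this]
    simp
    ring
  · intro i
    exact (by fun_prop : Measurable fun z : ℂ => ENNReal.ofReal (‖z‖ ^ (2 * α i))).indicator
      Metric.isOpen_ball.measurableSet

theorem exp_tail (x : ℝ) :
    ENNReal.ofReal (Real.exp (-x)) = ∫⁻ t in Set.Ioi x, ENNReal.ofReal (Real.exp (-t)) := by
  rw [← ofReal_integral_eq_lintegral_ofReal (integrableOn_exp_neg_Ioi x)
    (ae_of_all _ fun t => (Real.exp_pos _).le), integral_exp_neg_Ioi]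

theorem main_eq {n : ℕ} (hn : 0 < n) (p : Fin n → ℝ) (hp : ∀ j, 0 < p j) (α : Fin n → ℕ)
    (L q : ℝ) (hq : q = ∑ j, ((α j : ℝ) + 1) / p j - 1) :
    ∫⁻ w in {w : Fin n → ℂ | psi p w < L},
          ENNReal.ofReal (‖∏ j, (w j) ^ (α j)‖ ^ 2 * Real.exp (-psi p w)) =
      ENNReal.ofReal (Real.pi ^ n / (∏ j, ((α j : ℝ) + 1))) *
        ((∫⁻ t in Set.Iic L, ENNReal.ofReal (Real.exp (q * t))) + ENNReal.ofReal (Real.exp (q * L)))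
      := by
  have hpm := psi_meas p
  have hS : ∀ s, MeasurableSet {w : Fin n → ℂ | psi p w < s} := fun s =>
    measurableSet_lt hpm measurable_const
  set C := Real.pi ^ n / (∏ j, ((α j : ℝ) + 1)) with hC
  have hC0 : 0 ≤ C := by positivity
  have hQ : ∑ j, ((α j : ℝ) + 1) / p j = q + 1 := by linarith
  set F : (Fin n → ℂ) → ENNReal := fun w => ENNReal.ofReal (‖∏ j, (w j) ^ (α j)‖ ^ 2) with hF
  have hFm : Measurable F := by
    have : Measurable fun w : Fin n → ℂ => ∏ j, (w j) ^ (α j) := by fun_prop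
    fun_prop
  have e1 : ∀ w : Fin n → ℂ, ENNReal.ofReal (‖∏ j, (w j) ^ (α j)‖ ^ 2 * Real.exp (-psi p w)) =
      ∫⁻ t, F w * {x : (Fin n → ℂ) × ℝ | psi p x.1 < x.2}.indicator
        (fun x => ENNReal.ofReal (Real.exp (-x.2))) (w, t) := by
    intro w
    rw [ENNReal.ofReal_mul (by positivity), exp_tail, lintegral_const_mul',
      ← lintegral_indicator measurableSet_Ioi]
    · rfl
    · exact ENNReal.ofReal_ne_top
  simp_rw [e1]
  rw [lintegral_lintegral_swap]
  swap
  · apply Measurable.aemeasurable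
    apply Measurable.mul (by fun_prop)
    apply Measurable.indicator (by fun_prop)
    exact measurableSet_lt (by fun_prop) (by fun_prop)
  have e2 : ∀ t : ℝ, ∫⁻ w in {w : Fin n → ℂ | psi p w < L},
      F w * {x : (Fin n → ℂ) × ℝ | psi p x.1 < x.2}.indicator
        (fun x => ENNReal.ofReal (Real.exp (-x.2))) (w, t) =
      ENNReal.ofReal C * ENNReal.ofReal (Real.exp (min t L * (q + 1) - t)) := by
    intro t
    have : ∀ w, F w * {x : (Fin n → ℂ) × ℝ | psi p x.1 < x.2}.indicator
        (fun x => ENNReal.ofReal (Real.exp (-x.2))) (w, t) =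
        {w : Fin n → ℂ | psi p w < t}.indicator
          (fun w => F w * ENNReal.ofReal (Real.exp (-t))) w := by
      intro w
      by_cases h : psi p w < t
      · rw [Set.indicator_of_mem (by exact h), Set.indicator_of_mem (by exact h)]
      · rw [Set.indicator_of_notMem (by exact h), Set.indicator_of_notMem (by exact h), mul_zero]
    simp_rw [this]
    rw [setLIntegral_indicator (hS t)]
    have : {w : Fin n → ℂ | psi p w < t} ∩ {w : Fin n → ℂ | psi p w < L} =
        {w : Fin n → ℂ | psi p w < min t L} := by
      ext w; simp
    rw [this, lintegral_mul_const _ hFm, box hn p hp, hQ, ← hC, ENNReal.ofReal_mul hC0, mul_assoc,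
      ← ENNReal.ofReal_mul (Real.exp_pos _).le, ← Real.exp_add, sub_eq_add_neg]
  simp_rw [e2]
  rw [lintegral_const_mul _ (by fun_prop), ← lintegral_add_compl _ (measurableSet_Iic (a := L)),
    Set.compl_Iic]
  congr 2
  · refine setLIntegral_congr_fun measurableSet_Iic fun t ht => ?_
    simp only [min_eq_left (Set.mem_Iic.mp ht)]
    congr 2; ring
  · have : ENNReal.ofReal (Real.exp (q * L)) =
        ENNReal.ofReal (Real.exp (L * (q + 1))) * ENNReal.ofReal (Real.exp (-L)) := by
      rw [← ENNReal.ofReal_mul (Real.exp_pos _).le, ← Real.exp_add]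
      congr 2; ring
    rw [this, exp_tail, ← lintegral_const_mul' _ _ ENNReal.ofReal_ne_top]
    refine setLIntegral_congr_fun measurableSet_Ioi fun t ht => ?_
    simp only [min_eq_right (le_of_lt (Set.mem_Ioi.mp ht))]
    rw [← ENNReal.ofReal_mul (Real.exp_pos _).le, ← Real.exp_add, sub_eq_add_neg]

theorem stmt_2 (n : ℕ) (hn : 0 < n) (p : Fin n → ℝ) (hp : ∀ j, 0 < p j)
    (α : Fin n → ℕ) (r₁ : ℝ) (hr₁ : 0 < r₁)
    (q : ℝ) (hq : q = ∑ j, ((α j : ℝ) + 1) / p j - 1) :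
    ((∫⁻ w in {w : Fin n → ℂ | psi p w < Real.log r₁},
          ENNReal.ofReal (‖∏ j, (w j) ^ (α j)‖ ^ 2 * Real.exp (-psi p w))) < ⊤
        ↔ 0 < q) ∧
    (0 < q →
      (∫⁻ w in {w : Fin n → ℂ | psi p w < Real.log r₁},
          ENNReal.ofReal (‖∏ j, (w j) ^ (α j)‖ ^ 2 * Real.exp (-psi p w))) =
        ENNReal.ofReal (Real.pi ^ n * (q + 1) * r₁ ^ q /
          (q * ∏ j, ((α j : ℝ) + 1)))) := by
  have hprod : (0:ℝ) < ∏ j, ((α j : ℝ) + 1) := Finset.prod_pos fun j _ => by positivity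
  have hC : 0 < Real.pi ^ n / (∏ j, ((α j : ℝ) + 1)) := by positivity
  have hval : 0 < q →
      (∫⁻ w in {w : Fin n → ℂ | psi p w < Real.log r₁},
          ENNReal.ofReal (‖∏ j, (w j) ^ (α j)‖ ^ 2 * Real.exp (-psi p w))) =
        ENNReal.ofReal (Real.pi ^ n * (q + 1) * r₁ ^ q /
          (q * ∏ j, ((α j : ℝ) + 1))) := by
    intro h0
    rw [main_eq hn p hp α _ q hq, ← ofReal_integral_eq_lintegral_ofReal
      (integrableOn_exp_mul_Iic h0 _) (ae_of_all _ fun t => (Real.exp_pos _).le),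
      integral_exp_mul_Iic h0, ← ENNReal.ofReal_add (by positivity) (by positivity),
      ← ENNReal.ofReal_mul hC.le, Real.rpow_def_of_pos hr₁, mul_comm q (Real.log r₁)]
    congr 1
    field_simp
    ring
  refine ⟨⟨fun h => ?_, fun h => ?_⟩, hval⟩
  · by_contra h0
    push Not at h0
    rw [main_eq hn p hp α _ q hq] at h
    have htop : ∫⁻ t in Set.Iic (Real.log r₁), ENNReal.ofReal (Real.exp (q * t)) = ⊤ := by
      rw [eq_top_iff]
      calc ⊤ = ∫⁻ t in Set.Iic (Real.log r₁), ENNReal.ofReal (Real.exp (q * Real.log r₁)) := by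
            rw [setLIntegral_const, Real.volume_Iic, ENNReal.mul_top]
            simp [Real.exp_pos]
        _ ≤ _ := by
            refine setLIntegral_mono' measurableSet_Iic fun t ht => ?_
            apply ENNReal.ofReal_le_ofReal
            apply Real.exp_le_exp.mpr
            exact mul_le_mul_of_nonpos_left ht h0
    rw [htop, top_add, ENNReal.mul_top (by simpa using hC)] at h
    exact lt_irrefl _ h
  · rw [hval h]
    exact ENNReal.ofReal_lt_top
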